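/- Assume the comodule category A_F of the normal triangular matrix comonad F is hereditary. Then for all indices i < j < k and every injective object E_i of A_i, the morphism δ^{ijk}_{E_i} : F_{ik}(E_i) ⟶ F_{jk}(F_{ij}(E_i)) is a split epimorphism. -/

import Mathlib

/-!
STATEMENT 13: If the category of comodules over a normal triangular matrix comonad
`F` on `A₁ × ⋯ × Aₙ` is hereditary, then for all `i < j < k` and every injective
object `E` of `A_i`, the component `δ^{ijk}_E : F_{ik}(E) ⟶ F_{jk}(F_{ij}(E))` is a
split epimorphism.
-/

open CategoryTheory Limits

universe v u

variable {n : ℕ} {A : Fin n → Type u} [∀ i, Category.{v} (A i)]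
  [∀ i, Abelian (A i)] [∀ i, EnoughInjectives (A i)]
variable (F : ∀ ⦃i j : Fin n⦄, i < j → (A i ⥤ A j))
variable (δ : ∀ ⦃i k j : Fin n⦄ (h₁ : i < k) (h₂ : k < j), F (h₁.trans h₂) ⟶ F h₁ ⋙ F h₂)

/-- A comodule over the normal triangular matrix comonad determined by the data
`(F, δ)`. -/
structure Comod where
  X : ∀ i, A i
  d : ∀ {i j : Fin n} (h : i < j), X j ⟶ (F h).obj (X i)
  compat : ∀ {i k j : Fin n} (h₁ : i < k) (h₂ : k < j),
    d h₂ ≫ (F h₂).map (d h₁) = d (h₁.trans h₂) ≫ (δ h₁ h₂).app (X i)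

/-- Morphisms of comodules. -/
@[ext]
structure ComodHom (M N : Comod F δ) where
  f : ∀ i, M.X i ⟶ N.X i
  comm : ∀ {i j : Fin n} (h : i < j), f j ≫ N.d h = M.d h ≫ (F h).map (f i)

instance : Category (Comod F δ) where
  Hom M N := ComodHom F δ M N
  id M := ⟨fun i => 𝟙 (M.X i), fun h => by simp⟩
  comp f g := ⟨fun i => f.f i ≫ g.f i, fun h => by
    rw [Category.assoc, g.comm, ← Category.assoc, f.comm, Category.assoc, Functor.map_comp]⟩
  id_comp f := by apply ComodHom.ext; funext i; exact Category.id_comp _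
  comp_id f := by apply ComodHom.ext; funext i; exact Category.comp_id _
  assoc f g h := by apply ComodHom.ext; funext i; exact Category.assoc _ _ _

/-- A category is hereditary if for every epimorphism `e : E ⟶ X` with `E` injective,
`X` is also injective. -/
def Hereditary (C : Type*) [Category C] : Prop :=
  ∀ ⦃E X : C⦄ (e : E ⟶ X), Epi e → Injective E → Injective X

/-- The forgetful functor from comodules to `A₁ × ⋯ × Aₙ`. -/
def forgetComod : Comod F δ ⥤ (∀ i, A i) where
  obj M := M.X
  map f := f.f

/-!
The cofree comodule `C` on an injective object `E` of `A i` is injective, so its quotient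
`Q := (0, …, 0, C j, …, C n)` is injective as well, and `Q.d : Q k ⟶ F_{jk} (Q j)` is the component
of `δ` at `E`. Let `D` be the cofree comodule on `Q j`. The subcomodule of `Q` concentrated in
degree `j` embeds into `D` as well as into `Q`, so injectivity of `Q` yields a morphism
`g : D ⟶ Q` with `g j = 𝟙`. Since `D k = F_{jk} (Q j)`, compatibility of `g` with the structure
morphisms says precisely that `g k` is a section of `Q.d`.
-/

section Prerequisites

/-- Definition of a dependent function on a linear order by cases, according to whether the
argument is greater than, equal to or less than a fixed element `i`. -/
def trichotomyRec {α : Type*} [LinearOrder α] {motive : α → Sort*} (i : α)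
    (above : ∀ l, i < l → motive l) (self : motive i) (below : ∀ l, l < i → motive l) (l : α) :
    motive l :=
  if h : i < l then above l h else if e : i = l then e ▸ self else
    below l (lt_of_le_of_ne (not_lt.1 h) (Ne.symm e))

section TrichotomyRec

variable {α : Type*} [LinearOrder α] {motive : α → Sort*} {i : α}
  (above : ∀ l, i < l → motive l) (self : motive i) (below : ∀ l, l < i → motive l)

lemma trichotomyRec_of_lt {l : α} (h : i < l) : trichotomyRec i above self below l = above l h :=
  dif_pos h

lemma trichotomyRec_self : trichotomyRec i above self below i = self := by
  simp [trichotomyRec]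

lemma trichotomyRec_of_gt {l : α} (h : l < i) : trichotomyRec i above self below l = below l h := by
  simp [trichotomyRec, h.not_gt, h.ne']

end TrichotomyRec

variable {C D : Type*} [Category* C] [Category* D]

lemma isZero_obj_of_preservesTerminal (G : C ⥤ D) [HasZeroObject D]
    [PreservesLimit (Functor.empty.{0} C) G] {X : C} (hX : IsZero X) : IsZero (G.obj X) :=
  (isZero_zero D).of_iso
    ((isZero_zero D).isoIsTerminal (hX.isTerminal.isTerminalObj G X)).symm

lemma isSplitEpi_of_isSplitEpi_comp_isIso {W X Y Z : C} (a : W ⟶ X) (f : X ⟶ Y) (b : Y ⟶ Z)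
    [IsIso a] [IsIso b] [IsSplitEpi (a ≫ f ≫ b)] : IsSplitEpi f := by
  have hf : f = inv a ≫ (a ≫ f ≫ b) ≫ inv b := by simp
  rw [hf]
  infer_instance

section KeepIf

variable [HasZeroObject C]

open scoped Classical ZeroObject in
/-- The object `X` if `P` holds, and the zero object otherwise. -/
noncomputable def keepIf (P : Prop) (X : C) : C :=
  if P then X else 0

variable {P : Prop} {X : C}

lemma keepIf_of (h : P) : keepIf P X = X :=
  if_pos h

lemma isZero_keepIf (h : ¬ P) : IsZero (keepIf P X) := by
  rw [keepIf, if_neg h]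
  exact isZero_zero C

open scoped Classical in
/-- The canonical projection: the identity if `P` holds, and zero otherwise. -/
noncomputable def keepIfProj (P : Prop) (X : C) : X ⟶ keepIf P X :=
  if h : P then eqToHom (keepIf_of h).symm else (isZero_keepIf h).from_ _

open scoped Classical in
/-- The canonical inclusion: the identity if `P` holds, and zero otherwise. -/
noncomputable def keepIfIncl (P : Prop) (X : C) : keepIf P X ⟶ X :=
  if h : P then eqToHom (keepIf_of h) else (isZero_keepIf h).to_ _

lemma keepIfProj_incl (h : P) : keepIfProj P X ≫ keepIfIncl P X = 𝟙 X := by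
  rw [keepIfProj, keepIfIncl, dif_pos h, dif_pos h, eqToHom_trans, eqToHom_refl]

@[simp]
lemma keepIfIncl_proj : keepIfIncl P X ≫ keepIfProj P X = 𝟙 (keepIf P X) := by
  by_cases h : P
  · rw [keepIfProj, keepIfIncl, dif_pos h, dif_pos h, eqToHom_trans, eqToHom_refl]
  · exact (isZero_keepIf h).eq_of_src _ _

lemma isIso_keepIfProj (h : P) : IsIso (keepIfProj P X) :=
  ⟨keepIfIncl P X, keepIfProj_incl h, keepIfIncl_proj⟩

lemma isIso_keepIfIncl (h : P) : IsIso (keepIfIncl P X) :=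
  ⟨keepIfProj P X, keepIfIncl_proj, keepIfProj_incl h⟩

end KeepIf

end Prerequisites

namespace Comod

-- The data are bound anew, so that here each `A i` is a category without further structure.
variable {n : ℕ} {A : Fin n → Type u} [∀ i, Category.{v} (A i)]
  {F : ∀ ⦃i j : Fin n⦄, i < j → (A i ⥤ A j)}
  {δ : ∀ ⦃i k j : Fin n⦄ (h₁ : i < k) (h₂ : k < j), F (h₁.trans h₂) ⟶ F h₁ ⋙ F h₂}

variable (δ) in
/-- Coassociativity of the comultiplication `δ`. -/
def Coassociative : Prop :=
  ∀ ⦃i k l j : Fin n⦄ (h₁ : i < k) (h₂ : k < l) (h₃ : l < j) (X : A i),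
    (δ h₁ (h₂.trans h₃)).app X ≫ (δ h₂ h₃).app ((F h₁).obj X) =
      (δ (h₁.trans h₂) h₃).app X ≫ (F h₃).map ((δ h₁ h₂).app X)

section Morphisms

variable {M N L : Comod F δ}

lemma hom_ext {f g : M ⟶ N} (h : ∀ l, f.f l = g.f l) : f = g :=
  ComodHom.ext (funext h)

lemma comp_f (f : M ⟶ N) (g : N ⟶ L) (l : Fin n) : (f ≫ g).f l = f.f l ≫ g.f l :=
  rfl

lemma mono_of_mono_f (m : M ⟶ N) (h : ∀ l, Mono (m.f l)) : Mono m where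
  right_cancellation f g hfg := hom_ext fun l => by
    have hl : f.f l ≫ m.f l = g.f l ≫ m.f l := congrArg (fun t => ComodHom.f t l) hfg
    exact (cancel_mono (m.f l)).1 hl

lemma epi_of_epi_f (e : M ⟶ N) (h : ∀ l, Epi (e.f l)) : Epi e where
  left_cancellation f g hfg := hom_ext fun l => by
    have hl : e.f l ≫ f.f l = e.f l ≫ g.f l := congrArg (fun t => ComodHom.f t l) hfg
    exact (cancel_epi (e.f l)).1 hl

end Morphisms

section KernelPair

variable [∀ i, HasPullbacks (A i)]
  [∀ ⦃i j : Fin n⦄ (h : i < j), PreservesLimitsOfShape WalkingCospan (F h)]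
  {M N : Comod F δ} (m : M ⟶ N)

lemma isPullback_map_kernelPair {i j : Fin n} (h : i < j) :
    IsPullback ((F h).map (pullback.fst (m.f i) (m.f i))) ((F h).map (pullback.snd (m.f i) (m.f i)))
      ((F h).map (m.f i)) ((F h).map (m.f i)) :=
  (IsPullback.of_hasPullback (m.f i) (m.f i)).map (F h)

/-- The structure morphism of the kernel pair of `m`, induced by that of `M`. -/
noncomputable def kernelPairD {i j : Fin n} (h : i < j) :
    pullback (m.f j) (m.f j) ⟶ (F h).obj (pullback (m.f i) (m.f i)) :=
  (isPullback_map_kernelPair m h).lift (pullback.fst _ _ ≫ M.d h) (pullback.snd _ _ ≫ M.d h) <| by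
    rw [Category.assoc, Category.assoc, ← m.comm h, pullback.condition_assoc]

lemma kernelPairD_fst {i j : Fin n} (h : i < j) :
    kernelPairD m h ≫ (F h).map (pullback.fst (m.f i) (m.f i)) =
      pullback.fst (m.f j) (m.f j) ≫ M.d h :=
  (isPullback_map_kernelPair m h).lift_fst _ _ _

lemma kernelPairD_snd {i j : Fin n} (h : i < j) :
    kernelPairD m h ≫ (F h).map (pullback.snd (m.f i) (m.f i)) =
      pullback.snd (m.f j) (m.f j) ≫ M.d h :=
  (isPullback_map_kernelPair m h).lift_snd _ _ _

/-- The kernel pair of a morphism of comodules, computed componentwise. -/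
noncomputable def kernelPair : Comod F δ where
  X i := pullback (m.f i) (m.f i)
  d h := kernelPairD m h
  compat {i k j} h₁ h₂ := by
    have fst_nat := (δ h₁ h₂).naturality (pullback.fst (m.f i) (m.f i))
    have snd_nat := (δ h₁ h₂).naturality (pullback.snd (m.f i) (m.f i))
    simp only [Functor.comp_map] at fst_nat snd_nat
    refine ((isPullback_map_kernelPair m h₁).map (F h₂)).hom_ext ?_ ?_
    · rw [Category.assoc, Category.assoc, ← fst_nat, ← Functor.map_comp, kernelPairD_fst,
        reassoc_of% kernelPairD_fst m (h₁.trans h₂), Functor.map_comp,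
        reassoc_of% kernelPairD_fst m h₂, M.compat]
    · rw [Category.assoc, Category.assoc, ← snd_nat, ← Functor.map_comp, kernelPairD_snd,
        reassoc_of% kernelPairD_snd m (h₁.trans h₂), Functor.map_comp,
        reassoc_of% kernelPairD_snd m h₂, M.compat]

lemma mono_f [Mono m] (i : Fin n) : Mono (m.f i) := by
  let fst : kernelPair m ⟶ M := ⟨fun _ => pullback.fst _ _, fun h => (kernelPairD_fst m h).symm⟩
  let snd : kernelPair m ⟶ M := ⟨fun _ => pullback.snd _ _, fun h => (kernelPairD_snd m h).symm⟩
  have fst_eq_snd : fst = snd := by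
    rw [← cancel_mono m]
    exact hom_ext fun _ => pullback.condition
  exact (mono_iff_fst_eq_snd (pullbackIsPullback (m.f i) (m.f i))).2
    (congrArg (fun t => ComodHom.f t i) fst_eq_snd)

end KernelPair

/-- The comodule `C` is cofree on its component in degree `i`: it vanishes below `i`, and its
structure morphisms identify `C.X l` with the value of `F` at `C.X i` for `i < l`. -/
structure IsCofreeAt (i : Fin n) (C : Comod F δ) : Prop where
  isZero {l : Fin n} (h : l < i) : IsZero (C.X l)
  isIso_d {l : Fin n} (h : i < l) : IsIso (C.d h)

lemma IsCofreeAt.hom_ext {i : Fin n} {C N : Comod F δ} (hC : IsCofreeAt i C) {f g : N ⟶ C}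
    (h : f.f i = g.f i) : f = g := by
  refine Comod.hom_ext fun l => ?_
  rcases lt_trichotomy l i with hl | rfl | hl
  · exact (hC.isZero hl).eq_of_tgt _ _
  · exact h
  · have := hC.isIso_d hl
    rw [← cancel_mono (C.d hl), f.comm, g.comm, h]

lemma IsCofreeAt.isSplitEpi_d_of_isIso_f {j : Fin n} {D Q : Comod F δ} (hD : IsCofreeAt j D)
    (g : D ⟶ Q) [IsIso (g.f j)] {k : Fin n} (h : j < k) : IsSplitEpi (Q.d h) := by
  have := hD.isIso_d h
  exact ⟨⟨inv (D.d h ≫ (F h).map (g.f j)) ≫ g.f k, by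
    rw [Category.assoc, g.comm h, IsIso.inv_hom_id]⟩⟩

variable [∀ i, HasZeroObject (A i)]

section CofreeX

variable (F) in
open scoped ZeroObject in
/-- The underlying family of the cofree comodule on an object `E` of `A i`. -/
noncomputable def cofreeX (i : Fin n) (E : A i) : ∀ l, A l :=
  trichotomyRec i (fun _ h => (F h).obj E) E (fun _ _ => 0)

variable {i : Fin n} (E : A i)

lemma isZero_cofreeX {l : Fin n} (h : l < i) : IsZero (cofreeX F i E l) := by
  rw [cofreeX, trichotomyRec_of_gt _ _ _ h]
  exact isZero_zero _

/-- The component of the cofree comodule in degree `i`. -/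
noncomputable def cofreeXSelfIso : cofreeX F i E i ≅ E :=
  eqToIso (trichotomyRec_self _ _ _)

/-- The components of the cofree comodule above degree `i`. -/
noncomputable def cofreeXIso {l : Fin n} (h : i < l) : cofreeX F i E l ≅ (F h).obj E :=
  eqToIso (trichotomyRec_of_lt _ _ _ h)

end CofreeX

variable [∀ ⦃i j : Fin n⦄ (h : i < j), PreservesLimit (Functor.empty.{0} (A i)) (F h)]

section Restrict

/-- The comodule with the components of `M` in the degrees in `S`, and zero elsewhere. -/
noncomputable def restrict (M : Comod F δ) (S : Set (Fin n)) (hS : S.OrdConnected) :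
    Comod F δ where
  X l := keepIf (l ∈ S) (M.X l)
  d h := keepIfIncl _ _ ≫ M.d h ≫ (F h).map (keepIfProj _ _)
  compat {i k j} h₁ h₂ := by
    by_cases hi : i ∈ S
    · by_cases hj : j ∈ S
      · have hk : k ∈ S := hS.out hi hj ⟨h₁.le, h₂.le⟩
        have nat := (δ h₁ h₂).naturality (keepIfProj (i ∈ S) (M.X i))
        simp only [Functor.comp_map] at nat
        simp only [Category.assoc, Functor.map_comp, nat]
        rw [← Functor.map_comp_assoc, keepIfProj_incl hk, CategoryTheory.Functor.map_id,
          Category.id_comp, reassoc_of% M.compat h₁ h₂]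
      · exact (isZero_keepIf hj).eq_of_src _ _
    · exact (isZero_obj_of_preservesTerminal (F h₂)
        (isZero_obj_of_preservesTerminal (F h₁) (isZero_keepIf hi))).eq_of_tgt _ _

variable (M : Comod F δ) {S : Set (Fin n)}

/-- The canonical projection onto the restriction to an upper set. -/
noncomputable def toRestrict (hS : IsUpperSet S) : M ⟶ M.restrict S hS.ordConnected where
  f _ := keepIfProj _ _
  comm {i j} h := by
    by_cases hi : i ∈ S
    · exact (reassoc_of% keepIfProj_incl (hS h.le hi)) _
    · exact (isZero_obj_of_preservesTerminal (F h) (isZero_keepIf hi)).eq_of_tgt _ _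

/-- The canonical inclusion of the restriction to a lower set. -/
noncomputable def ofRestrict (hS : IsLowerSet S) : M.restrict S hS.ordConnected ⟶ M where
  f _ := keepIfIncl _ _
  comm {i j} h := by
    by_cases hj : j ∈ S
    · simp [restrict, ← Functor.map_comp, keepIfProj_incl (hS h.le hj)]
    · exact (isZero_keepIf hj).eq_of_src _ _

lemma epi_toRestrict (hS : IsUpperSet S) : Epi (M.toRestrict hS) :=
  epi_of_epi_f _ fun _ => (SplitEpi.mk _ keepIfIncl_proj).epi

lemma isSplitEpi_d_of_restrict (hS : S.OrdConnected) {i j : Fin n} (h : i < j) (hi : i ∈ S)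
    (hj : j ∈ S) [hd : IsSplitEpi ((M.restrict S hS).d h)] : IsSplitEpi (M.d h) := by
  have := isIso_keepIfIncl (X := M.X j) hj
  have := isIso_keepIfProj (X := M.X i) hi
  have : IsSplitEpi (keepIfIncl (j ∈ S) (M.X j) ≫ M.d h ≫ (F h).map (keepIfProj (i ∈ S) (M.X i))) :=
    hd
  exact isSplitEpi_of_isSplitEpi_comp_isIso (keepIfIncl (j ∈ S) _) _
    ((F h).map (keepIfProj (i ∈ S) _))

end Restrict

section Cofree

namespace IsCofreeAt

variable {i : Fin n} {C N : Comod F δ}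

lemma exists_hom (hC : IsCofreeAt i C) (φ : N.X i ⟶ C.X i) : ∃ f : N ⟶ C, f.f i = φ := by
  have inv_d {l : Fin n} (h : i < l) : ∃ e : (F h).obj (C.X i) ⟶ C.X l, e ≫ C.d h = 𝟙 _ :=
    have := hC.isIso_d h
    ⟨inv (C.d h), IsIso.inv_hom_id _⟩
  choose e he using @inv_d
  let f : ∀ l, N.X l ⟶ C.X l := trichotomyRec i (fun l h => N.d h ≫ (F h).map φ ≫ e h) φ
    (fun _ h => (hC.isZero h).from_ _)
  have f_self : f i = φ := trichotomyRec_self _ _ _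
  have f_comp_d {l : Fin n} (h : i < l) : f l ≫ C.d h = N.d h ≫ (F h).map φ := by
    simp [f, trichotomyRec_of_lt _ _ _ h, he]
  refine ⟨⟨f, fun {a b} h => ?_⟩, f_self⟩
  rcases lt_trichotomy a i with ha | rfl | ha
  · exact (isZero_obj_of_preservesTerminal (F h) (hC.isZero ha)).eq_of_tgt _ _
  · rw [f_comp_d h, f_self]
  · have := hC.isIso_d ha
    have nat := (δ ha h).naturality φ
    simp only [Functor.comp_map] at nat
    rw [← cancel_mono ((F h).map (C.d ha))]
    calc (f b ≫ C.d h) ≫ (F h).map (C.d ha)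
        = (f b ≫ C.d (ha.trans h)) ≫ (δ ha h).app (C.X i) := by
          rw [Category.assoc, C.compat, Category.assoc]
      _ = N.d (ha.trans h) ≫ (δ ha h).app (N.X i) ≫ (F h).map ((F ha).map φ) := by
          rw [f_comp_d, Category.assoc, nat]
      _ = N.d h ≫ (F h).map (N.d ha ≫ (F ha).map φ) := by
          rw [← reassoc_of% N.compat ha h, Functor.map_comp]
      _ = (N.d h ≫ (F h).map (f a)) ≫ (F h).map (C.d ha) := by
          rw [← f_comp_d ha, Functor.map_comp, Category.assoc]

lemma injective [∀ i, HasPullbacks (A i)]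
    [∀ ⦃i j : Fin n⦄ (h : i < j), PreservesLimitsOfShape WalkingCospan (F h)]
    (hC : IsCofreeAt i C) [Injective (C.X i)] : Injective C where
  factors {M N} g m _ := by
    have := mono_f m i
    obtain ⟨f, hf⟩ := hC.exists_hom (Injective.factorThru (g.f i) (m.f i))
    refine ⟨f, hC.hom_ext ?_⟩
    rw [comp_f, hf, Injective.comp_factorThru]

end IsCofreeAt

variable {i : Fin n} (E : A i)

variable (δ) in
/-- The structure morphisms of the cofree comodule: up to the identifications of its components,
they are identities out of degree `i` and components of `δ` above. -/
noncomputable def cofreeD : ∀ (a b : Fin n) (h : a < b),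
    cofreeX F i E b ⟶ (F h).obj (cofreeX F i E a) :=
  trichotomyRec i
    (fun _ ha _ h =>
      (cofreeXIso E (ha.trans h)).hom ≫ (δ ha h).app E ≫ (F h).map (cofreeXIso E ha).inv)
    (fun _ h => (cofreeXIso E h).hom ≫ (F h).map (cofreeXSelfIso E).inv)
    (fun _ ha _ h => (isZero_obj_of_preservesTerminal (F h) (isZero_cofreeX E ha)).from_ _)

lemma cofreeD_self {b : Fin n} (h : i < b) :
    cofreeD δ E i b h = (cofreeXIso E h).hom ≫ (F h).map (cofreeXSelfIso E).inv := by
  rw [cofreeD, trichotomyRec_self]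

lemma cofreeD_of_lt {a b : Fin n} (ha : i < a) (h : a < b) :
    cofreeD δ E a b h =
      (cofreeXIso E (ha.trans h)).hom ≫ (δ ha h).app E ≫ (F h).map (cofreeXIso E ha).inv := by
  rw [cofreeD, trichotomyRec_of_lt _ _ _ ha]

/-- The cofree comodule on an object `E` of `A i`. -/
noncomputable def cofree (hδ : Coassociative δ) : Comod F δ where
  X := cofreeX F i E
  d h := cofreeD δ E _ _ h
  compat {a k b} h₁ h₂ := by
    rcases lt_trichotomy a i with ha | rfl | ha
    · exact (isZero_obj_of_preservesTerminal (F h₂)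
        (isZero_obj_of_preservesTerminal (F h₁) (isZero_cofreeX E ha))).eq_of_tgt _ _
    · have nat := (δ h₁ h₂).naturality (cofreeXSelfIso (F := F) E).inv
      simp only [Functor.comp_map] at nat
      simp only [cofreeD_self, cofreeD_of_lt E h₁ h₂, Category.assoc, nat, ← Functor.map_comp,
        Iso.inv_hom_id_assoc]
    · have nat := (δ h₁ h₂).naturality (cofreeXIso (F := F) E ha).inv
      simp only [Functor.comp_map] at nat
      simp only [cofreeD_of_lt E ha, cofreeD_of_lt E (ha.trans h₁) h₂, Category.assoc, nat,
        reassoc_of% hδ ha h₁ h₂ E, ← Functor.map_comp, Iso.inv_hom_id_assoc]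

variable (hδ : Coassociative δ)

lemma isCofreeAt_cofree : IsCofreeAt i (cofree E hδ) where
  isZero h := isZero_cofreeX E h
  isIso_d h := by
    change IsIso (cofreeD δ E _ _ h)
    rw [cofreeD_self]
    infer_instance

lemma isSplitEpi_app_of_cofree {j k : Fin n} (hij : i < j) (hjk : j < k)
    [hd : IsSplitEpi ((cofree E hδ).d hjk)] : IsSplitEpi ((δ hij hjk).app E) := by
  change IsSplitEpi (cofreeD δ E _ _ hjk) at hd
  rw [cofreeD_of_lt E hij] at hd
  exact isSplitEpi_of_isSplitEpi_comp_isIso (cofreeXIso E _).hom _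
    ((F hjk).map (cofreeXIso E hij).inv)

end Cofree

section Injective

variable {D Q : Comod F δ} {j : Fin n}

lemma mono_ofRestrict_comp (hQ : ∀ l < j, IsZero (Q.X l)) (η : Q ⟶ D) [IsIso (η.f j)] :
    Mono (Q.ofRestrict (isLowerSet_Iic j) ≫ η) := by
  refine mono_of_mono_f _ fun l => ?_
  rcases lt_trichotomy l j with hl | rfl | hl
  · have := isIso_keepIfIncl (X := Q.X l) (show l ∈ Set.Iic j from hl.le)
    have := (hQ l hl).mono (η.f l)
    exact mono_comp (keepIfIncl _ _) (η.f l)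
  · have := isIso_keepIfIncl (X := Q.X l) (Set.self_mem_Iic (a := l))
    exact mono_comp (keepIfIncl _ _) (η.f l)
  · exact (isZero_keepIf (Set.mem_Iic.not.2 hl.not_ge)).mono _

lemma IsCofreeAt.isSplitEpi_d_of_injective (hD : IsCofreeAt j D) (e : Q.X j ≅ D.X j) [Injective Q]
    (hQ : ∀ l < j, IsZero (Q.X l)) {k : Fin n} (h : j < k) : IsSplitEpi (Q.d h) := by
  obtain ⟨η, hη⟩ := hD.exists_hom e.hom
  have : IsIso (η.f j) := hη ▸ inferInstance
  have := mono_ofRestrict_comp hQ η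
  let ι := Q.ofRestrict (isLowerSet_Iic j)
  obtain ⟨g, hg⟩ := Injective.factors ι (ι ≫ η)
  have : IsIso (ι.f j) := isIso_keepIfIncl Set.self_mem_Iic
  have ηg : η.f j ≫ g.f j = 𝟙 (Q.X j) := by
    rw [← cancel_epi (ι.f j), Category.comp_id, ← Category.assoc]
    exact congrArg (fun t => ComodHom.f t j) hg
  have : IsIso (g.f j) := by
    rw [← IsIso.inv_eq_of_hom_inv_id ηg]
    infer_instance
  exact hD.isSplitEpi_d_of_isIso_f g h

end Injective

end Comod

open Comod

theorem stmt_13_general {n : ℕ} {A : Fin n → Type u} [∀ i, Category.{v} (A i)]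
    [∀ i, HasZeroObject (A i)] [∀ i, HasPullbacks (A i)]
    {F : ∀ ⦃i j : Fin n⦄, i < j → (A i ⥤ A j)}
    [∀ ⦃i j : Fin n⦄ (h : i < j), PreservesFiniteLimits (F h)]
    {δ : ∀ ⦃i k j : Fin n⦄ (h₁ : i < k) (h₂ : k < j), F (h₁.trans h₂) ⟶ F h₁ ⋙ F h₂}
    (hδ : Coassociative δ) (hH : Hereditary (Comod F δ)) {i j k : Fin n} (hij : i < j)
    (hjk : j < k) (E : A i) [Injective E] :
    IsSplitEpi ((δ hij hjk).app E) := by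
  let C := cofree E hδ
  have : Injective (C.X i) := Injective.of_iso (cofreeXSelfIso E).symm inferInstance
  have : Injective C := (isCofreeAt_cofree E hδ).injective
  let Q := C.restrict (Set.Ici j) (isUpperSet_Ici j).ordConnected
  have : Injective Q := hH (C.toRestrict (isUpperSet_Ici j)) (C.epi_toRestrict _) inferInstance
  have hQ : ∀ l < j, IsZero (Q.X l) := fun l hl => isZero_keepIf (Set.mem_Ici.not.2 hl.not_ge)
  have : IsSplitEpi (Q.d hjk) :=
    (isCofreeAt_cofree (Q.X j) hδ).isSplitEpi_d_of_injective (cofreeXSelfIso _).symm hQ hjk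
  have : IsSplitEpi (C.d hjk) :=
    C.isSplitEpi_d_of_restrict _ hjk Set.self_mem_Ici (Set.mem_Ici.2 hjk.le)
  exact isSplitEpi_app_of_cofree E hδ hij hjk

theorem stmt_13
    (hδ : ∀ ⦃i k l j : Fin n⦄ (h₁ : i < k) (h₂ : k < l) (h₃ : l < j) (X : A i),
      (δ h₁ (h₂.trans h₃)).app X ≫ (δ h₂ h₃).app ((F h₁).obj X) =
        (δ (h₁.trans h₂) h₃).app X ≫ (F h₃).map ((δ h₁ h₂).app X))
    (hadd : ∀ ⦃i j : Fin n⦄ (h : i < j), (F h).Additive)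
    (hlex : ∀ ⦃i j : Fin n⦄ (h : i < j), PreservesFiniteLimits (F h))
    (hH : Hereditary (Comod F δ))
    ⦃i j k : Fin n⦄ (hij : i < j) (hjk : j < k)
    (E : A i) (hE : Injective E) :
    IsSplitEpi ((δ hij hjk).app E) := by
  exact stmt_13_general hδ hH hij hjk E
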